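/- arXiv:1305.7212 — 2 statements merged into one kernel-verified Lean document; each statement's English description precedes it below -/
import Mathlib

section
/- A finitely additive measure μ on the positive integers is a density measure if and only if μ(A) = μ(πA) for every set A ⊆ ℕ and every permutation π of ℕ satisfying lim_{n→∞} π(n)/n = 1. -/
open Filter Topology

/-- The counting function `A(n) = |A ∩ [1, n]|`, as a real number. -/
noncomputable def count (A : Set ℕ) (n : ℕ) : ℝ :=
  ((A ∩ Set.Icc 1 n).ncard : ℝ)

/-- `A ⊆ ℕ` has asymptotic density `a`, i.e. `A(n)/n → a`. -/
def HasDensity (A : Set ℕ) (a : ℝ) : Prop :=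
  Filter.Tendsto (fun n : ℕ => count A n / n) Filter.atTop (nhds a)

/-- Membership of a permutation `π` of `ℕ` in the Lévy group `𝒢`:
`|{k : k ≤ n < π(k)}| / n → 0`. -/
def InLevyGroup (π : Equiv.Perm ℕ) : Prop :=
  Filter.Tendsto
    (fun n : ℕ => (({k : ℕ | k ≤ n ∧ n < π k}.ncard : ℝ) / n))
    Filter.atTop (nhds 0)

/-- A finitely additive probability measure defined on all subsets of `ℕ`,
with values in `[0, 1]`. -/
def IsFAMeasure (μ : Set ℕ → ℝ) : Prop :=
  (∀ A : Set ℕ, 0 ≤ μ A) ∧ (∀ A : Set ℕ, μ A ≤ 1) ∧ μ Set.univ = 1 ∧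
    ∀ A B : Set ℕ, Disjoint A B → μ (A ∪ B) = μ A + μ B

/-- A density measure: a finitely additive measure extending asymptotic density. -/
def IsDensityMeasure (μ : Set ℕ → ℝ) : Prop :=
  IsFAMeasure μ ∧ ∀ (A : Set ℕ) (a : ℝ), HasDensity A a → μ A = a

/-- Statistical convergence of a real sequence `x` to `L`: for every `ε > 0`
the set `{n : |x n − L| ≥ ε}` has asymptotic density zero. -/
def StatTendsto (x : ℕ → ℝ) (L : ℝ) : Prop :=
  ∀ ε : ℝ, 0 < ε → HasDensity {n : ℕ | ε ≤ |x n - L|} 0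

/-- The limit of a (bounded) real sequence along an ultrafilter on `ℕ`. -/
noncomputable def ulim (𝒰 : Ultrafilter ℕ) (x : ℕ → ℝ) : ℝ :=
  limUnder (𝒰 : Filter ℕ) x

/-!
If `π(n) / n → 1`, then only `o(n)` of the numbers up to `n` are moved beyond `n` by `π`, so the
counting functions of `A` and `π A` differ by `o(n)`. For such `A` and `B`, half of the complement
of `A ∆ B` completes both `A \ B` and `B \ A` to sets of density `1 / 2`, and so a density measure
cannot tell `A` from `B`.

Conversely, if `A` and `B` have the same density in `(0, 1)`, the permutation matching `A` with `B`
and `Aᶜ` with `Bᶜ` in increasing order satisfies `π(n) / n → 1`, so an invariant `μ` depends only on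
the density of a set. Cutting `ℕ` into `k` sets of density `1 / k` gives `μ A = m / k` for all sets
`A` of density `m / k > 0`. A set of density `a` contains such sets with `m / k` arbitrarily close
to `a`, whence `a ≤ μ A`; the same bound for `Aᶜ` gives equality.
-/

open Asymptotics

/-! ### Counting functions and density -/

lemma count_nonneg (A : Set ℕ) (n : ℕ) : 0 ≤ count A n := Nat.cast_nonneg _

lemma count_univ (n : ℕ) : count Set.univ n = n := by
  simp [count, Set.ncard_eq_toFinset_card']

lemma count_union {A B : Set ℕ} (h : Disjoint A B) (n : ℕ) :
    count (A ∪ B) n = count A n + count B n := by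
  have hn : Disjoint (A ∩ Set.Icc 1 n) (B ∩ Set.Icc 1 n) :=
    h.mono Set.inter_subset_left Set.inter_subset_left
  rw [count, Set.union_inter_distrib_right, Set.ncard_union_eq hn, Nat.cast_add, count, count]

lemma count_add_count_compl (A : Set ℕ) (n : ℕ) : count A n + count Aᶜ n = n := by
  rw [← count_union disjoint_compl_right, Set.union_compl_self, count_univ]

lemma count_diff_add_count_inter (A B : Set ℕ) (n : ℕ) :
    count (A \ B) n + count (A ∩ B) n = count A n := by
  rw [← count_union Set.disjoint_sdiff_inter, Set.sdiff_union_inter]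

lemma count_le_ncard {A : Set ℕ} (hA : A.Finite) (n : ℕ) : count A n ≤ A.ncard :=
  Nat.cast_le.mpr (Set.ncard_le_ncard Set.inter_subset_left hA)

open Classical in
lemma count_succ (A : Set ℕ) (n : ℕ) :
    count A (n + 1) = count A n + if n + 1 ∈ A then 1 else 0 := by
  have hIcc : Set.Icc 1 (n + 1) = insert (n + 1) (Set.Icc 1 n) :=
    Order.Icc_succ_right (Nat.le_add_left 1 n)
  rw [count, count, hIcc]
  split_ifs with h
  · rw [Set.inter_insert_of_mem h, Set.ncard_insert_of_notMem (by simp), Nat.cast_succ]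
  · rw [Set.inter_insert_of_notMem h, add_zero]

lemma abs_ncard_inter_Iic_sub_count_le (A : Set ℕ) (n : ℕ) :
    |((A ∩ Set.Iic n).ncard : ℝ) - count A n| ≤ 1 := by
  have hlower : (A ∩ Set.Icc 1 n).ncard ≤ (A ∩ Set.Iic n).ncard :=
    Set.ncard_le_ncard (Set.inter_subset_inter_right A Set.Icc_subset_Iic_self)
  have hsub : A ∩ Set.Iic n ⊆ insert 0 (A ∩ Set.Icc 1 n) := by
    rintro k ⟨hkA, hkn⟩
    exact k.eq_zero_or_pos.imp_right fun hk => ⟨hkA, hk, hkn⟩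
  have hupper : (A ∩ Set.Iic n).ncard ≤ (A ∩ Set.Icc 1 n).ncard + 1 :=
    (Set.ncard_le_ncard hsub).trans (Set.ncard_insert_le _ _)
  rw [count, abs_le]
  have hlower' : ((A ∩ Set.Icc 1 n).ncard : ℝ) ≤ (A ∩ Set.Iic n).ncard := mod_cast hlower
  have hupper' : ((A ∩ Set.Iic n).ncard : ℝ) ≤ (A ∩ Set.Icc 1 n).ncard + 1 := mod_cast hupper
  constructor <;> linarith

/-- The witness `C` consists of the elements of `A` at which `⌊t * A(n)⌋` jumps; as `t ≤ 1`, every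
jump has size one. -/
lemma exists_subset_count_eq_floor (A : Set ℕ) {t : ℝ} (ht0 : 0 ≤ t) (ht1 : t ≤ 1) :
    ∃ C ⊆ A, ∀ n, count C n = ⌊t * count A n⌋₊ := by
  classical
  refine ⟨{x ∈ A | ⌊t * count A (x - 1)⌋₊ < ⌊t * count A x⌋₊}, fun x hx => hx.1, fun n => ?_⟩
  induction n with
  | zero => simp [count]
  | succ n ih =>
    rw [count_succ, ih, count_succ A]
    by_cases hA : n + 1 ∈ A
    · have hle : ⌊t * count A n⌋₊ ≤ ⌊t * (count A n + 1)⌋₊ := Nat.floor_le_floor (by linarith)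
      have hle_succ : ⌊t * (count A n + 1)⌋₊ ≤ ⌊t * count A n⌋₊ + 1 := by
        rw [← Nat.floor_add_one (mul_nonneg ht0 (count_nonneg A n))]
        exact Nat.floor_le_floor (by linarith)
      simp only [Set.mem_ofPred_eq, hA, true_and, if_true, Nat.add_sub_cancel, count_succ A]
      split_ifs <;> norm_cast <;> omega
    · simp [hA]

lemma isLittleO_natCast_iff_tendsto_div {f : ℕ → ℝ} :
    f =o[atTop] (fun n : ℕ => (n : ℝ)) ↔ Tendsto (fun n : ℕ => f n / n) atTop (𝓝 0) := by
  refine isLittleO_iff_tendsto' ?_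
  filter_upwards [eventually_ne_atTop 0] with n hn h
  exact absurd h (Nat.cast_ne_zero.mpr hn)

lemma isLittleO_natCast_of_norm_le {E : Type*} [SeminormedAddCommGroup E] {f : ℕ → E} {c : ℝ}
    (h : ∀ n, ‖f n‖ ≤ c) :
    f =o[atTop] fun n : ℕ => (n : ℝ) :=
  (IsBigO.of_bound' (g := fun _ => c) (Eventually.of_forall fun n =>
    (h n).trans (le_abs_self c))).trans_isLittleO
      ((isLittleO_const_id_atTop c).comp_tendsto tendsto_natCast_atTop_atTop)

lemma exists_subset_isLittleO_count (A : Set ℕ) {t : ℝ} (ht0 : 0 ≤ t) (ht1 : t ≤ 1) :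
    ∃ C ⊆ A, (fun n => count C n - t * count A n) =o[atTop] fun n : ℕ => (n : ℝ) := by
  obtain ⟨C, hCA, hC⟩ := exists_subset_count_eq_floor A ht0 ht1
  refine ⟨C, hCA, isLittleO_natCast_of_norm_le (c := 1) fun n => ?_⟩
  rw [hC]
  exact Nat.abs_floor_sub_le (mul_nonneg ht0 (count_nonneg A n))

lemma hasDensity_iff_isLittleO {A : Set ℕ} {a : ℝ} :
    HasDensity A a ↔ (fun n => count A n - a * n) =o[atTop] fun n : ℕ => (n : ℝ) := by
  rw [isLittleO_natCast_iff_tendsto_div, HasDensity, ← tendsto_sub_nhds_zero_iff]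
  refine tendsto_congr' ?_
  filter_upwards [eventually_ne_atTop 0] with n hn
  rw [sub_div, mul_div_cancel_right₀ a (Nat.cast_ne_zero.mpr hn)]

namespace HasDensity

variable {A B : Set ℕ} {a b : ℝ}

protected lemma univ : HasDensity Set.univ 1 := by
  simp [hasDensity_iff_isLittleO, count_univ]

lemma nonneg (hA : HasDensity A a) : 0 ≤ a :=
  ge_of_tendsto' hA fun n => div_nonneg (count_nonneg A n) n.cast_nonneg

protected lemma compl (hA : HasDensity A a) : HasDensity Aᶜ (1 - a) := by
  rw [hasDensity_iff_isLittleO] at *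
  refine hA.neg_left.congr_left fun n => ?_
  linarith [count_add_count_compl A n]

protected lemma diff (hA : HasDensity A a) (hB : HasDensity B b) (hBA : B ⊆ A) :
    HasDensity (A \ B) (a - b) := by
  rw [hasDensity_iff_isLittleO] at *
  refine (hA.sub hB).congr_left fun n => ?_
  have hcount := count_diff_add_count_inter A B n
  rw [Set.inter_eq_right.mpr hBA] at hcount
  linarith

lemma tendsto_ncard_inter_Iic_div (hA : HasDensity A a) :
    Tendsto (fun n : ℕ => ((A ∩ Set.Iic n).ncard : ℝ) / n) atTop (𝓝 a) := by
  have hdiff : Tendsto (fun n : ℕ => (((A ∩ Set.Iic n).ncard : ℝ) - count A n) / n) atTop (𝓝 0) :=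
    isLittleO_natCast_iff_tendsto_div.mp
      (isLittleO_natCast_of_norm_le (abs_ncard_inter_Iic_sub_count_le A))
  simpa only [sub_div, sub_add_cancel, zero_add] using hdiff.add hA

lemma infinite (hA : HasDensity A a) (ha : 0 < a) : A.Infinite := by
  intro hfin
  have hzero : HasDensity A 0 := isLittleO_natCast_iff_tendsto_div.mp <|
    isLittleO_natCast_of_norm_le fun n =>
      (abs_of_nonneg (count_nonneg A n)).trans_le (count_le_ncard hfin n)
  exact ha.ne' (tendsto_nhds_unique hA hzero)

lemma exists_subset (hA : HasDensity A a) (hb : 0 ≤ b) (hba : b ≤ a) :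
    ∃ C ⊆ A, HasDensity C b := by
  have ha : 0 ≤ a := hb.trans hba
  have hba_mul : b / a * a = b := div_mul_cancel_of_imp fun h => le_antisymm (h ▸ hba) hb
  obtain ⟨C, hCA, hC⟩ :=
    exists_subset_isLittleO_count A (div_nonneg hb ha) (div_le_one_of_le₀ hba ha)
  refine ⟨C, hCA, ?_⟩
  rw [hasDensity_iff_isLittleO] at *
  refine (hC.add (hA.const_mul_left (b / a))).congr_left fun n => ?_
  rw [mul_sub, ← mul_assoc, hba_mul]
  ring

end HasDensity

namespace IsFAMeasure

variable {μ : Set ℕ → ℝ}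

lemma union (hμ : IsFAMeasure μ) {A B : Set ℕ} (h : Disjoint A B) : μ (A ∪ B) = μ A + μ B :=
  hμ.2.2.2 A B h

lemma diff_add_inter (hμ : IsFAMeasure μ) (A B : Set ℕ) : μ (A \ B) + μ (A ∩ B) = μ A := by
  rw [← hμ.union Set.disjoint_sdiff_inter, Set.sdiff_union_inter]

lemma diff_add_of_subset (hμ : IsFAMeasure μ) {A B : Set ℕ} (h : B ⊆ A) :
    μ (A \ B) + μ B = μ A := by
  simpa only [Set.inter_eq_right.mpr h] using hμ.diff_add_inter A B

lemma mono (hμ : IsFAMeasure μ) {A B : Set ℕ} (h : A ⊆ B) : μ A ≤ μ B := by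
  linarith [hμ.diff_add_of_subset h, hμ.1 (B \ A)]

lemma add_compl (hμ : IsFAMeasure μ) (A : Set ℕ) : μ A + μ Aᶜ = 1 := by
  rw [← hμ.union disjoint_compl_right, Set.union_compl_self, hμ.2.2.1]

end IsFAMeasure

/-! ### Density measures are invariant -/

lemma ncard_setOf_le_and_lt_apply_le {f : ℕ → ℕ} {N : ℕ} {ε : ℝ} (hε : 0 ≤ ε)
    (hf : ∀ k ≥ N, (f k : ℝ) - k ≤ ε * k) (n : ℕ) :
    {k : ℕ | k ≤ n ∧ n < f k}.ncard ≤ N + ⌈ε * n⌉₊ := by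
  have hsub : {k : ℕ | k ≤ n ∧ n < f k} ⊆
      ↑(Finset.range N ∪ Finset.Icc (n + 1 - ⌈ε * n⌉₊) n) := by
    rintro k ⟨hkn, hnk⟩
    rcases lt_or_ge k N with hk | hk
    · simp [hk]
    have hgap : n - k < ⌈ε * n⌉₊ := by
      rw [Nat.lt_ceil, Nat.cast_sub hkn]
      calc (n : ℝ) - k < f k - k := by gcongr
        _ ≤ ε * k := hf k hk
        _ ≤ ε * n := by gcongr
    rw [Finset.mem_coe, Finset.mem_union, Finset.mem_Icc]
    omega
  calc _ ≤ (Finset.range N ∪ Finset.Icc (n + 1 - ⌈ε * n⌉₊) n).card :=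
        (Set.ncard_le_ncard hsub).trans_eq (Set.ncard_coe_finset _)
    _ ≤ N + (n + 1 - (n + 1 - ⌈ε * n⌉₊)) := by
        simpa using Finset.card_union_le (Finset.range N) (Finset.Icc (n + 1 - ⌈ε * n⌉₊) n)
    _ ≤ N + ⌈ε * n⌉₊ := by omega

lemma inLevyGroup_of_tendsto_div {π : Equiv.Perm ℕ}
    (hπ : Tendsto (fun n : ℕ => (π n : ℝ) / n) atTop (𝓝 1)) : InLevyGroup π := by
  have hsub : (fun n : ℕ => (π n : ℝ) - n) =o[atTop] fun n : ℕ => (n : ℝ) :=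
    (isEquivalent_of_tendsto_one hπ).isLittleO
  refine isLittleO_natCast_iff_tendsto_div.mp (isLittleO_iff.mpr fun ε hε => ?_)
  obtain ⟨N, hN⟩ := eventually_atTop.mp (hsub.bound (half_pos hε))
  have hcard := ncard_setOf_le_and_lt_apply_le (half_pos hε).le fun k hk => by
    simpa using (le_abs_self _).trans (hN k hk)
  filter_upwards [tendsto_natCast_atTop_atTop.eventually_ge_atTop ((N + 1) / (ε / 2))] with n hn
  rw [div_le_iff₀ (half_pos hε)] at hn
  simp only [RCLike.norm_natCast]
  calc ({k : ℕ | k ≤ n ∧ n < π k}.ncard : ℝ) ≤ N + ⌈ε / 2 * n⌉₊ := mod_cast hcard n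
    _ ≤ N + (ε / 2 * n + 1) := by gcongr; exact (Nat.ceil_lt_add_one (by positivity)).le
    _ ≤ ε * n := by linarith

lemma count_le_count_image_add (π : Equiv.Perm ℕ) (A : Set ℕ) (n : ℕ) :
    count A n ≤ count (π '' A) n + ({k : ℕ | k ≤ n ∧ n < π k}.ncard + 1) := by
  have hfin : {k : ℕ | k ≤ n ∧ n < π k}.Finite := (Set.finite_Iic n).subset fun k hk => hk.1
  have hsub : A ∩ Set.Icc 1 n ⊆ π.symm '' (π '' A ∩ Set.Icc 1 n) ∪
      insert (π.symm 0) {k : ℕ | k ≤ n ∧ n < π k} := by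
    rintro k ⟨hkA, -, hkn⟩
    rcases lt_or_ge n (π k) with hk | hk
    · exact Or.inr (Or.inr ⟨hkn, hk⟩)
    rcases (π k).eq_zero_or_pos with hk0 | hk0
    · exact Or.inr (Or.inl (π.eq_symm_apply.mpr hk0))
    · exact Or.inl ⟨π k, ⟨Set.mem_image_of_mem π hkA, hk0, hk⟩, π.symm_apply_apply k⟩
  have hcard : (A ∩ Set.Icc 1 n).ncard ≤
      (π '' A ∩ Set.Icc 1 n).ncard + ({k : ℕ | k ≤ n ∧ n < π k}.ncard + 1) :=
    (Set.ncard_le_ncard hsub (((Set.toFinite _).image _).union (hfin.insert _))).trans <|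
      (Set.ncard_union_le _ _).trans <|
        add_le_add (Set.ncard_image_le (Set.toFinite _)) (Set.ncard_insert_le _ _)
  unfold count
  exact_mod_cast hcard

lemma abs_count_sub_count_image_le (π : Equiv.Perm ℕ) (A : Set ℕ) (n : ℕ) :
    |count A n - count (π '' A) n| ≤ {k : ℕ | k ≤ n ∧ n < π k}.ncard + 1 := by
  have hA := count_le_count_image_add π A n
  have hAc := count_le_count_image_add π Aᶜ n
  rw [Set.image_compl_eq π.bijective] at hAc
  have hsum := count_add_count_compl A n
  have hsum_image := count_add_count_compl (π '' A) n
  rw [abs_le]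
  constructor <;> linarith

lemma InLevyGroup.isLittleO_count_sub_count_image {π : Equiv.Perm ℕ} (hπ : InLevyGroup π)
    (A : Set ℕ) :
    (fun n => count A n - count (π '' A) n) =o[atTop] fun n : ℕ => (n : ℝ) := by
  have hbound := (isLittleO_natCast_iff_tendsto_div.mpr hπ).add
    (isLittleO_natCast_of_norm_le (f := fun _ => 1) fun _ => le_rfl)
  refine (IsBigO.of_bound' (Eventually.of_forall fun n => ?_)).trans_isLittleO hbound
  exact (abs_count_sub_count_image_le π A n).trans (le_abs_self _)

lemma exists_hasDensity_union_half {A B : Set ℕ} (hAB : Disjoint A B)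
    (h : (fun n => count A n - count B n) =o[atTop] fun n : ℕ => (n : ℝ)) :
    ∃ C, Disjoint A C ∧ Disjoint B C ∧ HasDensity (A ∪ C) (1 / 2) ∧ HasDensity (B ∪ C) (1 / 2) := by
  obtain ⟨C, hCsub, hC⟩ :=
    exists_subset_isLittleO_count (A ∪ B)ᶜ (t := 1 / 2) (by norm_num) (by norm_num)
  have hABC : Disjoint (A ∪ B) C := Set.subset_compl_iff_disjoint_left.mp hCsub
  obtain ⟨hAC, hBC⟩ := Set.disjoint_union_left.mp hABC
  have hcount (n : ℕ) : count A n + count B n + count (A ∪ B)ᶜ n = n := by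
    rw [← count_union hAB, count_add_count_compl]
  refine ⟨C, hAC, hBC, ?_, ?_⟩ <;> rw [hasDensity_iff_isLittleO]
  · refine (hC.add (h.const_mul_left (1 / 2))).congr_left fun n => ?_
    rw [count_union hAC]
    linarith [hcount n]
  · refine (hC.sub (h.const_mul_left (1 / 2))).congr_left fun n => ?_
    rw [count_union hBC]
    linarith [hcount n]

lemma IsDensityMeasure.eq_of_isLittleO_count_sub {μ : Set ℕ → ℝ} (hμ : IsDensityMeasure μ)
    {A B : Set ℕ} (h : (fun n => count A n - count B n) =o[atTop] fun n : ℕ => (n : ℝ)) :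
    μ A = μ B := by
  have hdiff : (fun n => count (A \ B) n - count (B \ A) n) =o[atTop] fun n : ℕ => (n : ℝ) := by
    refine h.congr_left fun n => ?_
    have hB := count_diff_add_count_inter B A n
    rw [Set.inter_comm] at hB
    linarith [count_diff_add_count_inter A B n]
  obtain ⟨C, hAC, hBC, hA, hB⟩ := exists_hasDensity_union_half disjoint_sdiff_sdiff hdiff
  have hμ_diff : μ (A \ B) = μ (B \ A) := by
    linarith [hμ.1.union hAC, hμ.1.union hBC, hμ.2 _ _ hA, hμ.2 _ _ hB]
  rw [← hμ.1.diff_add_inter A B, hμ_diff, Set.inter_comm, hμ.1.diff_add_inter]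

/-! ### Matching sets of equal density -/

lemma tendsto_cofinite_of_subtype_of_compl {α β : Type*} {f : α → β} {l : Filter β} {s : Set α}
    (hs : Tendsto (fun x : s => f x) cofinite l)
    (hsc : Tendsto (fun x : ↥sᶜ => f x) cofinite l) : Tendsto f cofinite l := by
  rw [← Subtype.val_injective.comap_cofinite_eq] at hs hsc
  replace hs := tendsto_map'_iff.mpr hs
  replace hsc := tendsto_map'_iff.mpr hsc
  rw [subtype_coe_map_comap] at hs hsc
  simpa [← inf_sup_left] using hs.sup hsc

lemma ncard_inter_Iic_coe {α : Type*} [Preorder α] {A : Set α} (x : A) :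
    (A ∩ Set.Iic (x : α)).ncard = (Set.Iic x).ncard := by
  rw [← Subtype.image_preimage_coe, Set.ncard_image_of_injective _ Subtype.val_injective]
  rfl

lemma ncard_inter_Iic_orderIso {α β : Type*} [Preorder α] [Preorder β] {A : Set α} {B : Set β}
    (e : A ≃o B) (x : A) : (B ∩ Set.Iic (e x : β)).ncard = (A ∩ Set.Iic (x : α)).ncard := by
  rw [ncard_inter_Iic_coe, ncard_inter_Iic_coe, ← e.image_Iic,
    Set.ncard_image_of_injective _ e.injective]

lemma tendsto_orderIso_div {A B : Set ℕ} {a : ℝ} (ha : a ≠ 0) (hA : HasDensity A a)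
    (hB : HasDensity B a) (e : A ≃o B) :
    Tendsto (fun x : A => ((e x : ℕ) : ℝ) / (x : ℕ)) cofinite (𝓝 1) := by
  have hval : Tendsto (fun x : A => (x : ℕ)) cofinite atTop :=
    Nat.cofinite_eq_atTop ▸ Subtype.val_injective.tendsto_cofinite
  have heval : Tendsto (fun x : A => (e x : ℕ)) cofinite atTop :=
    Nat.cofinite_eq_atTop ▸ (Subtype.val_injective.comp e.injective).tendsto_cofinite
  have hA' := hA.tendsto_ncard_inter_Iic_div.comp hval
  have hB' := hB.tendsto_ncard_inter_Iic_div.comp heval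
  have hquot := hA'.div hB' ha
  rw [div_self ha] at hquot
  refine hquot.congr fun x => ?_
  have hrank : ((A ∩ Set.Iic (x : ℕ)).ncard : ℝ) ≠ 0 :=
    Nat.cast_ne_zero.mpr (Set.ncard_ne_zero_of_mem ⟨x.2, Set.self_mem_Iic⟩)
  simp only [Pi.div_apply, Function.comp_apply, ncard_inter_Iic_orderIso]
  exact div_div_div_cancel_left' _ _ hrank

lemma nonempty_orderIso_of_infinite {A B : Set ℕ} (hA : A.Infinite) (hB : B.Infinite) :
    Nonempty (A ≃o B) := by
  have := hA.to_subtype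
  have := hB.to_subtype
  exact ⟨(Nat.Subtype.orderIsoOfNat A).symm.trans (Nat.Subtype.orderIsoOfNat B)⟩

lemma exists_perm_extending {α : Type*} {A B : Set α} (e : A ≃ B) (e' : ↥Aᶜ ≃ ↥Bᶜ) :
    ∃ π : Equiv.Perm α, (∀ x : A, π x = e x) ∧ (∀ x : ↥Aᶜ, π x = e' x) ∧ π '' A = B := by
  classical
  let π : Equiv.Perm α := Equiv.subtypeCongr e e'
  have hπ (x : A) : π x = e x := by simp [π, Equiv.subtypeCongr]
  have hπ' (x : ↥Aᶜ) : π x = e' x := by simp [π, Equiv.subtypeCongr]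
  refine ⟨π, hπ, hπ', ?_⟩
  rw [Set.image_eq_range]
  simp only [hπ]
  exact (e.surjective.range_comp Subtype.val).trans Subtype.range_val

lemma exists_perm_tendsto_div_image_eq {A B : Set ℕ} {a : ℝ} (ha0 : 0 < a) (ha1 : a < 1)
    (hA : HasDensity A a) (hB : HasDensity B a) :
    ∃ π : Equiv.Perm ℕ, Tendsto (fun n : ℕ => (π n : ℝ) / n) atTop (𝓝 1) ∧ π '' A = B := by
  have ha1' : 0 < 1 - a := sub_pos.mpr ha1
  obtain ⟨e⟩ := nonempty_orderIso_of_infinite (hA.infinite ha0) (hB.infinite ha0)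
  obtain ⟨e'⟩ := nonempty_orderIso_of_infinite (hA.compl.infinite ha1') (hB.compl.infinite ha1')
  obtain ⟨π, hπ, hπ', himage⟩ := exists_perm_extending e.toEquiv e'.toEquiv
  refine ⟨π, ?_, himage⟩
  rw [← Nat.cofinite_eq_atTop]
  refine tendsto_cofinite_of_subtype_of_compl (s := A) ?_ ?_
  · simpa only [hπ, OrderIso.coe_toEquiv] using tendsto_orderIso_div ha0.ne' hA hB e
  · simpa only [hπ', OrderIso.coe_toEquiv] using tendsto_orderIso_div ha1'.ne' hA.compl hB.compl e'

/-! ### Measures determined by density -/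

/-- A set function takes equal values on sets of equal density, for densities strictly between `0`
and `1`. The endpoints are left out because there the sets, or their complements, may be finite, and
then no permutation need carry one to the other. -/
def DependsOnlyOnDensity (μ : Set ℕ → ℝ) : Prop :=
  ∀ ⦃A B : Set ℕ⦄ ⦃a : ℝ⦄, 0 < a → a < 1 → HasDensity A a → HasDensity B a → μ A = μ B

namespace DependsOnlyOnDensity

variable {μ : Set ℕ → ℝ} {A : Set ℕ}

lemma eq_natCast_mul (h : DependsOnlyOnDensity μ) (hμ : IsFAMeasure μ) {E : Set ℕ} {d : ℝ}
    (hd0 : 0 < d) (hd1 : d < 1) (hE : HasDensity E d) {m : ℕ} (hm : 1 ≤ m)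
    (hA : HasDensity A (m * d)) : μ A = m * μ E := by
  induction m, hm using Nat.le_induction generalizing A with
  | base => simpa using h hd0 hd1 (by simpa using hA) hE
  | succ m hm ih =>
    rw [Nat.cast_succ, add_one_mul] at hA ⊢
    obtain ⟨C, hCA, hC⟩ := hA.exists_subset hd0.le (le_add_of_nonneg_left (by positivity))
    have hAC := hA.diff hC hCA
    rw [add_sub_cancel_right] at hAC
    rw [← hμ.diff_add_of_subset hCA, ih hAC, h hd0 hd1 hC hE]

lemma eq_natCast_div (h : DependsOnlyOnDensity μ) (hμ : IsFAMeasure μ) {m k : ℕ} (hm : 1 ≤ m)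
    (hk : 2 ≤ k) (hA : HasDensity A (m / k)) : μ A = m / k := by
  have hk0 : (0 : ℝ) < k := by positivity
  have hk1 : (k : ℝ)⁻¹ < 1 := inv_lt_one_of_one_lt₀ (by exact_mod_cast hk)
  have hpos : 0 < (k : ℝ)⁻¹ := inv_pos.mpr hk0
  obtain ⟨E, -, hE⟩ := HasDensity.univ.exists_subset hpos.le hk1.le
  have huniv : μ Set.univ = k * μ E :=
    h.eq_natCast_mul hμ hpos hk1 hE (by omega)
      (by simpa only [mul_inv_cancel₀ hk0.ne'] using HasDensity.univ)
  rw [h.eq_natCast_mul hμ hpos hk1 hE hm hA, eq_div_iff hk0.ne', mul_assoc, mul_comm (μ E),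
    ← huniv, hμ.2.2.1, mul_one]

lemma le_of_hasDensity (h : DependsOnlyOnDensity μ) (hμ : IsFAMeasure μ) {a : ℝ}
    (hA : HasDensity A a) : a ≤ μ A := by
  refine le_of_tendsto
    ((tendsto_nat_floor_mul_div_atTop hA.nonneg).comp tendsto_natCast_atTop_atTop) ?_
  filter_upwards [eventually_ge_atTop 2] with k hk
  have hle : (⌊a * k⌋₊ : ℝ) / k ≤ a :=
    div_le_of_le_mul₀ k.cast_nonneg hA.nonneg (Nat.floor_le (mul_nonneg hA.nonneg k.cast_nonneg))
  rcases Nat.eq_zero_or_pos ⌊a * k⌋₊ with hm | hm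
  · simpa [hm] using hμ.1 A
  · obtain ⟨C, hCA, hC⟩ := hA.exists_subset (by positivity) hle
    exact (h.eq_natCast_div hμ hm hk hC).symm.trans_le (hμ.mono hCA)

lemma isDensityMeasure (h : DependsOnlyOnDensity μ) (hμ : IsFAMeasure μ) : IsDensityMeasure μ := by
  refine ⟨hμ, fun A a hA => le_antisymm ?_ (h.le_of_hasDensity hμ hA)⟩
  linarith [hμ.add_compl A, h.le_of_hasDensity hμ hA.compl]

end DependsOnlyOnDensity

/-- Van Douwen's characterization: a finitely additive measure `μ` on `ℕ` is a
density measure iff `μ(A) = μ(πA)` for every `A ⊆ ℕ` and every permutation `π`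
with `π(n)/n → 1`. -/
theorem isDensityMeasure_iff_invariant_under_ratio_one_perms
    (μ : Set ℕ → ℝ) (hμ : IsFAMeasure μ) :
    IsDensityMeasure μ ↔
      ∀ (A : Set ℕ) (π : Equiv.Perm ℕ),
        Filter.Tendsto (fun n : ℕ => (π n : ℝ) / n) Filter.atTop (nhds 1) →
        μ A = μ (π '' A) := by
  refine ⟨fun h A π hπ => ?_, fun h => ?_⟩
  · exact h.eq_of_isLittleO_count_sub
      ((inLevyGroup_of_tendsto_div hπ).isLittleO_count_sub_count_image A)
  · refine DependsOnlyOnDensity.isDensityMeasure (fun A B a ha0 ha1 hA hB => ?_) hμ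
    obtain ⟨π, hπ, rfl⟩ := exists_perm_tendsto_div_image_eq ha0 ha1 hA hB
    exact h A π hπ
end

section
/- Let A, B ⊆ ℕ be such that A, B, ℕ∖A and ℕ∖B are all infinite. Then there exists a permutation π in the Lévy group 𝒢 with B = πA if and only if lim_{n→∞} (A(n) − B(n))/n = 0. -/
open Filter Topology

/-!
Conservation of mass: if `f` is injective and `a`, `a'` are the numbers of points of `A` and of
`f '' A` in `[0, n]`, then `a' - a` is the number of points of `A` that `f` carries down across `n`
minus the number that it carries up. For `A = univ` and `f` a permutation both numbers of crossings
agree, so that the upward crossings of a permutation bound `|a - a'|` for every `A`.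

Conversely, a map that is monotone on `A` cannot cross `n` in both directions within `A`, so a
permutation that is monotone both on `A` and on `Aᶜ` wastes no crossing: it has exactly `|a - a'|`
upward ones. Matching `A` with `B` and `Aᶜ` with `Bᶜ` in increasing order gives such a permutation.
-/

section Crossing

open Set

variable {α : Type*} [LinearOrder α]

/-- The points of `A` that `f` carries upwards across `n`. The Lévy group is defined by the growth
of these sets for `A = univ`; a general `A` allows `A` and `Aᶜ` to be counted separately. -/
def upCrossing (f : α → α) (A : Set α) (n : α) : Set α := {k ∈ A | k ≤ n ∧ n < f k}

/-- The points of `A` that `f` carries downwards across `n`; they balance the upward crossings. -/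
def downCrossing (f : α → α) (A : Set α) (n : α) : Set α := {k ∈ A | f k ≤ n ∧ n < k}

theorem upCrossing_subset_Iic (f : α → α) (A : Set α) (n : α) : upCrossing f A n ⊆ Iic n :=
  fun _ hk => hk.2.1

theorem upCrossing_mono (f : α → α) {A B : Set α} (hAB : A ⊆ B) (n : α) :
    upCrossing f A n ⊆ upCrossing f B n :=
  fun _ hk => ⟨hAB hk.1, hk.2⟩

theorem downCrossing_mono (f : α → α) {A B : Set α} (hAB : A ⊆ B) (n : α) :
    downCrossing f A n ⊆ downCrossing f B n :=
  fun _ hk => ⟨hAB hk.1, hk.2⟩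

theorem upCrossing_eq_empty_or_downCrossing_eq_empty {f : α → α} {A : Set α}
    (hf : MonotoneOn f A) (n : α) : upCrossing f A n = ∅ ∨ downCrossing f A n = ∅ := by
  by_contra! ⟨⟨k, hkA, hkn, hnk⟩, ⟨l, hlA, hln, hnl⟩⟩
  exact (hf hkA hlA (hkn.trans hnl.le)).not_gt (hln.trans_lt hnk)

variable [LocallyFiniteOrderBot α]

theorem finite_upCrossing (f : α → α) (A : Set α) (n : α) : (upCrossing f A n).Finite :=
  (finite_Iic n).subset (upCrossing_subset_Iic f A n)

theorem finite_inter_preimage_Iic {f : α → α} {A : Set α} (hf : InjOn f A) (n : α) :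
    (A ∩ f ⁻¹' Iic n).Finite :=
  ((finite_Iic n).subset (by simp)).of_finite_image (hf.mono inter_subset_left)

theorem finite_downCrossing {f : α → α} {A : Set α} (hf : InjOn f A) (n : α) :
    (downCrossing f A n).Finite :=
  (finite_inter_preimage_Iic hf n).subset fun _ hk => ⟨hk.1, hk.2.1⟩

theorem ncard_inter_Iic_add_ncard_downCrossing {f : α → α} {A : Set α} (hf : InjOn f A) (n : α) :
    (A ∩ Iic n).ncard + (downCrossing f A n).ncard =
      (f '' A ∩ Iic n).ncard + (upCrossing f A n).ncard := by
  have hdisj_down : Disjoint (A ∩ Iic n) (downCrossing f A n) :=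
    Set.disjoint_left.2 fun _ hk hk' => hk'.2.2.not_ge hk.2
  have hdisj_up : Disjoint (A ∩ f ⁻¹' Iic n) (upCrossing f A n) :=
    Set.disjoint_left.2 fun _ hk hk' => hk'.2.2.not_ge hk.2
  have hunion : A ∩ Iic n ∪ downCrossing f A n = A ∩ f ⁻¹' Iic n ∪ upCrossing f A n := by
    ext k
    simp only [upCrossing, downCrossing, mem_union, mem_inter_iff, mem_Iic, mem_preimage,
      mem_ofPred_eq]
    grind
  calc (A ∩ Iic n).ncard + (downCrossing f A n).ncard
      = (A ∩ Iic n ∪ downCrossing f A n).ncard :=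
        (ncard_union_eq hdisj_down ((finite_Iic n).subset inter_subset_right)
          (finite_downCrossing hf n)).symm
    _ = (A ∩ f ⁻¹' Iic n).ncard + (upCrossing f A n).ncard := by
        rw [hunion, ncard_union_eq hdisj_up (finite_inter_preimage_Iic hf n)
          (finite_upCrossing f A n)]
    _ = (f '' A ∩ Iic n).ncard + (upCrossing f A n).ncard := by
        rw [← image_inter_preimage, (hf.mono inter_subset_left).ncard_image]

theorem ncard_downCrossing_univ_eq_ncard_upCrossing_univ (π : Equiv.Perm α) (n : α) :
    (downCrossing π univ n).ncard = (upCrossing π univ n).ncard := by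
  have h := ncard_inter_Iic_add_ncard_downCrossing (π.injective.injOn (s := univ)) n
  rw [image_univ, π.range_eq_univ] at h
  exact Nat.add_left_cancel h

theorem abs_ncard_inter_Iic_sub_ncard_image_inter_Iic_le (π : Equiv.Perm α) (A : Set α) (n : α) :
    |((A ∩ Iic n).ncard : ℝ) - (π '' A ∩ Iic n).ncard| ≤ (upCrossing π univ n).ncard := by
  have hbalance := ncard_inter_Iic_add_ncard_downCrossing (π.injective.injOn (s := A)) n
  have hup : (upCrossing π A n).ncard ≤ (upCrossing π univ n).ncard :=
    ncard_le_ncard (upCrossing_mono π (subset_univ A) n) (finite_upCrossing π univ n)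
  have hdown : (downCrossing π A n).ncard ≤ (upCrossing π univ n).ncard :=
    ncard_downCrossing_univ_eq_ncard_upCrossing_univ π n ▸
      ncard_le_ncard (downCrossing_mono π (subset_univ A) n)
        (finite_downCrossing π.injective.injOn n)
  rw [abs_sub_le_iff, sub_le_iff_le_add, sub_le_iff_le_add]
  norm_cast
  omega

theorem ncard_upCrossing_of_monotoneOn {f : α → α} {A : Set α} (hinj : InjOn f A)
    (hmono : MonotoneOn f A) (n : α) :
    (upCrossing f A n).ncard = (A ∩ Iic n).ncard - (f '' A ∩ Iic n).ncard := by
  have hbalance := ncard_inter_Iic_add_ncard_downCrossing hinj n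
  rcases upCrossing_eq_empty_or_downCrossing_eq_empty hmono n with h | h
  · rw [h, ncard_empty] at hbalance ⊢
    omega
  · rw [h, ncard_empty] at hbalance
    omega

theorem ncard_upCrossing_add_ncard_upCrossing_compl (f : α → α) (A : Set α) (n : α) :
    (upCrossing f A n).ncard + (upCrossing f Aᶜ n).ncard = (upCrossing f univ n).ncard := by
  rw [← ncard_inter_add_ncard_sdiff_eq_ncard (upCrossing f univ n) A (finite_upCrossing f univ n)]
  congr 2 <;> ext k <;> simp [upCrossing, and_comm]

theorem ncard_inter_Iic_add_ncard_compl_inter_Iic (A : Set α) (n : α) :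
    (A ∩ Iic n).ncard + (Aᶜ ∩ Iic n).ncard = (Iic n).ncard := by
  rw [inter_comm A, inter_comm Aᶜ, ← sdiff_eq,
    ncard_inter_add_ncard_sdiff_eq_ncard _ _ (finite_Iic n)]

theorem ncard_upCrossing_univ_of_monotoneOn {π : Equiv.Perm α} {A : Set α}
    (hA : MonotoneOn π A) (hAc : MonotoneOn π Aᶜ) (n : α) :
    ((upCrossing π univ n).ncard : ℝ) =
      |((A ∩ Iic n).ncard : ℝ) - (π '' A ∩ Iic n).ncard| := by
  have hcard := ncard_inter_Iic_add_ncard_compl_inter_Iic A n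
  have hcard_image := ncard_inter_Iic_add_ncard_compl_inter_Iic (π '' A) n
  have hup := ncard_upCrossing_add_ncard_upCrossing_compl π A n
  rw [ncard_upCrossing_of_monotoneOn π.injective.injOn hA,
    ncard_upCrossing_of_monotoneOn π.injective.injOn hAc, image_compl_eq π.bijective] at hup
  rcases le_total (A ∩ Iic n).ncard (π '' A ∩ Iic n).ncard with h | h
  · rw [abs_sub_comm, ← Nat.cast_sub h, Nat.abs_cast]
    norm_cast
    omega
  · rw [← Nat.cast_sub h, Nat.abs_cast]
    norm_cast
    omega

end Crossing

theorem exists_perm_image_eq_and_strictMonoOn {α : Type*} [Preorder α] {A B : Set α}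
    (e : A ≃o B) (e' : (Aᶜ : Set α) ≃o (Bᶜ : Set α)) :
    ∃ π : Equiv.Perm α, π '' A = B ∧ StrictMonoOn π A ∧ StrictMonoOn π Aᶜ := by
  classical
  let π : Equiv.Perm α := (Equiv.Set.sumCompl A).symm.trans
    ((e.toEquiv.sumCongr e'.toEquiv).trans (Equiv.Set.sumCompl B))
  have hπ (a : A) : π a = e a := by simp [π]
  have hπ' (a : (Aᶜ : Set α)) : π a = e' a := by simp [π]
  refine ⟨π, ?_, fun a ha b hb hab => ?_, fun a ha b hb hab => ?_⟩
  · simp only [Set.image_eq_range, hπ]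
    exact (e.surjective.range_comp Subtype.val).trans Subtype.range_coe
  · rw [hπ ⟨a, ha⟩, hπ ⟨b, hb⟩]
    exact e.strictMono hab
  · rw [hπ' ⟨a, ha⟩, hπ' ⟨b, hb⟩]
    exact e'.strictMono hab

theorem nonempty_orderIso_of_encard_eq {A B : Set ℕ} (h : A.encard = B.encard) :
    Nonempty (A ≃o B) := by
  rcases A.finite_or_infinite with hA | hA
  · lift B to Finset ℕ using (Set.finite_iff_finite_of_encard_eq_encard h).1 hA
    lift A to Finset ℕ using hA
    rw [Set.encard_coe_eq_coe_finsetCard, Set.encard_coe_eq_coe_finsetCard, Nat.cast_inj] at h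
    exact ⟨(A.orderIsoOfFin h).symm.trans (B.orderIsoOfFin rfl)⟩
  · classical
    have := hA.to_subtype
    have := ((Set.infinite_iff_infinite_of_encard_eq_encard h).1 hA).to_subtype
    exact ⟨(Nat.Subtype.orderIsoOfNat A).symm.trans (Nat.Subtype.orderIsoOfNat B)⟩

section LevyGroup

open Set

theorem inLevyGroup_iff_tendsto_ncard_upCrossing {π : Equiv.Perm ℕ} :
    InLevyGroup π ↔ Tendsto (fun n : ℕ => ((upCrossing π univ n).ncard : ℝ) / n) atTop (𝓝 0) := by
  simp [InLevyGroup, upCrossing]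

-- `count` ignores the point `0`, which permutations of `ℕ` may move.
theorem ncard_inter_Iic_eq_count_add (A : Set ℕ) (n : ℕ) :
    ((A ∩ Iic n).ncard : ℝ) = count A n + (A ∩ {0}).ncard := by
  have hunion : A ∩ Iic n = A ∩ Icc 1 n ∪ A ∩ {0} := by
    rw [← inter_union_distrib_left]
    congr 1
    ext k
    simp only [mem_Iic, mem_union, mem_Icc, mem_singleton_iff]
    omega
  have hdisj : Disjoint (A ∩ Icc 1 n) (A ∩ {0}) :=
    Disjoint.mono inter_subset_right inter_subset_right (by simp)
  rw [count, hunion, ncard_union_eq hdisj ((finite_Icc 1 n).subset inter_subset_right),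
    Nat.cast_add]

theorem tendsto_count_sub_div_iff (A B : Set ℕ) :
    Tendsto (fun n : ℕ => (count A n - count B n) / n) atTop (𝓝 0) ↔
      Tendsto (fun n : ℕ => |((A ∩ Iic n).ncard : ℝ) - (B ∩ Iic n).ncard| / n) atTop (𝓝 0) := by
  set c : ℝ := (A ∩ {0}).ncard - (B ∩ {0}).ncard
  have hadd (n : ℕ) : (((A ∩ Iic n).ncard : ℝ) - (B ∩ Iic n).ncard) / n =
      (count A n - count B n) / n + c / n := by
    rw [ncard_inter_Iic_eq_count_add, ncard_inter_Iic_eq_count_add]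
    ring
  have habs (n : ℕ) : |((A ∩ Iic n).ncard : ℝ) - (B ∩ Iic n).ncard| / n =
      |(count A n - count B n) / n + c / n| := by
    rw [← hadd, abs_div, Nat.abs_cast]
  have hc : Tendsto (fun n : ℕ => c / n) atTop (𝓝 0) := tendsto_const_div_atTop_nhds_zero_nat c
  simp only [habs]
  refine Iff.trans ?_ (tendsto_zero_iff_abs_tendsto_zero _)
  exact ⟨fun h => by simpa using h.add hc, fun h => by simpa using h.sub hc⟩

theorem InLevyGroup.tendsto_count_sub_count_image_div {π : Equiv.Perm ℕ} (hπ : InLevyGroup π)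
    (A : Set ℕ) : Tendsto (fun n : ℕ => (count A n - count (π '' A) n) / n) atTop (𝓝 0) := by
  rw [tendsto_count_sub_div_iff]
  refine squeeze_zero (fun n => by positivity) (fun n => ?_)
    (inLevyGroup_iff_tendsto_ncard_upCrossing.1 hπ)
  gcongr
  exact abs_ncard_inter_Iic_sub_ncard_image_inter_Iic_le π A n

theorem inLevyGroup_iff_of_monotoneOn {π : Equiv.Perm ℕ} {A : Set ℕ}
    (hA : MonotoneOn π A) (hAc : MonotoneOn π Aᶜ) :
    InLevyGroup π ↔
      Tendsto (fun n : ℕ => (count A n - count (π '' A) n) / n) atTop (𝓝 0) := by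
  simp only [inLevyGroup_iff_tendsto_ncard_upCrossing, tendsto_count_sub_div_iff,
    ncard_upCrossing_univ_of_monotoneOn hA hAc]

end LevyGroup

theorem exists_levyGroup_perm_iff_count_diff_tendsto_zero_general (A B : Set ℕ) :
    (∃ π : Equiv.Perm ℕ, InLevyGroup π ∧ B = π '' A) ↔
      A.encard = B.encard ∧ Aᶜ.encard = Bᶜ.encard ∧
        Tendsto (fun n : ℕ => (count A n - count B n) / n) atTop (𝓝 0) := by
  constructor
  · rintro ⟨π, hπ, rfl⟩
    refine ⟨(π.injective.encard_image A).symm, ?_, hπ.tendsto_count_sub_count_image_div A⟩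
    rw [← Set.image_compl_eq π.bijective, π.injective.encard_image]
  · rintro ⟨hcard, hcard_compl, hlim⟩
    obtain ⟨e⟩ := nonempty_orderIso_of_encard_eq hcard
    obtain ⟨e'⟩ := nonempty_orderIso_of_encard_eq hcard_compl
    obtain ⟨π, rfl, hA, hAc⟩ := exists_perm_image_eq_and_strictMonoOn e e'
    exact ⟨π, (inLevyGroup_iff_of_monotoneOn hA.monotoneOn hAc.monotoneOn).2 hlim, rfl⟩

/-- Blümlinger's lemma: if `A`, `B`, `ℕ∖A`, `ℕ∖B` are all infinite, then there
is a Lévy-group permutation `π` with `B = πA` iff `(A(n) − B(n))/n → 0`. -/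
theorem exists_levyGroup_perm_iff_count_diff_tendsto_zero (A B : Set ℕ)
    (hA : A.Infinite) (hB : B.Infinite) (hAc : Aᶜ.Infinite) (hBc : Bᶜ.Infinite) :
    (∃ π : Equiv.Perm ℕ, InLevyGroup π ∧ B = π '' A) ↔
      Filter.Tendsto (fun n : ℕ => (count A n - count B n) / n)
        Filter.atTop (nhds 0) := by
  simp [exists_levyGroup_perm_iff_count_diff_tendsto_zero_general, hA.encard_eq, hB.encard_eq,
    hAc.encard_eq, hBc.encard_eq]
end
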